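/- arXiv:2209.15286 — 10 statements merged into one kernel-verified Lean document; each statement's English description precedes it below -/
import Mathlib

section
/- Let m ∈ ℕ, m ≥ 1, let k ∈ ℕ with 0 ≤ k ≤ m−1, and let g : [0,1] → ℝ be a continuous function such that α ≤ g(t) ≤ β for all t ∈ [0,1], where α, β are real constants. Set S_k = (2k+1)/(2m), the midpoint of the interval [k/m, (k+1)/m]. Then (α − β)/(8m²) ≤ ∫_{k/m}^{(k+1)/m} (S_k − t) · g(t) dt ≤ (β − α)/(8m²). -/
/-!
The weight `c - t` is nonnegative to the left of the midpoint `c` and nonpositive to its right.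
Hence on `[c - d, c + d]` the integral of `(c - t) g(t)` is at most what one gets by replacing `g`
with `β` on the left half and with `α` on the right half, namely `β d² / 2 - α d² / 2`.
The lower bound is the upper bound for `-g`, which takes values in `[-β, -α]`.
With `d = 1 / (2m)` the constant is `d² / 2 = 1 / (8m²)`.
-/

lemma integral_midpoint_weight_le (c d : ℝ) (hd : 0 ≤ d) (g : ℝ → ℝ)
    (hg : ContinuousOn g (Set.Icc (c - d) (c + d))) (α β : ℝ)
    (hb : ∀ t ∈ Set.Icc (c - d) (c + d), α ≤ g t ∧ g t ≤ β) :
    ∫ t in (c - d)..(c + d), (c - t) * g t ≤ (β - α) * (d ^ 2 / 2) := by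
  have hcont : ContinuousOn (fun t => (c - t) * g t) (Set.Icc (c - d) (c + d)) := by fun_prop
  have hl : IntervalIntegrable (fun t => (c - t) * g t) MeasureTheory.volume (c - d) c :=
    (hcont.mono (Set.Icc_subset_Icc le_rfl (by linarith))).intervalIntegrable_of_Icc
      (by linarith)
  have hr : IntervalIntegrable (fun t => (c - t) * g t) MeasureTheory.volume c (c + d) :=
    (hcont.mono (Set.Icc_subset_Icc (by linarith) le_rfl)).intervalIntegrable_of_Icc
      (by linarith)
  have hleft : ∫ t in (c - d)..c, (c - t) * g t ≤ ∫ t in (c - d)..c, (c - t) * β := by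
    refine intervalIntegral.integral_mono_on (by linarith) hl
      (Continuous.intervalIntegrable (by fun_prop) _ _) fun t ht => ?_
    exact mul_le_mul_of_nonneg_left (hb t ⟨ht.1, by linarith [ht.2]⟩).2 (by linarith [ht.2])
  have hright : ∫ t in c..(c + d), (c - t) * g t ≤ ∫ t in c..(c + d), (c - t) * α := by
    refine intervalIntegral.integral_mono_on (by linarith) hr
      (Continuous.intervalIntegrable (by fun_prop) _ _) fun t ht => ?_
    exact mul_le_mul_of_nonpos_left (hb t ⟨by linarith [ht.1], ht.2⟩).1 (by linarith [ht.1])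
  have hweight (a b : ℝ) : ∫ t in a..b, (c - t) = c * (b - a) - (b ^ 2 - a ^ 2) / 2 := by
    rw [intervalIntegral.integral_sub (by simp) (by simp)]
    simp [mul_comm]
  rw [intervalIntegral.integral_mul_const, hweight] at hleft hright
  rw [← intervalIntegral.integral_add_adjacent_intervals hl hr]
  linarith

/-- Refined Taylor paper, Eq. (FF12): midpoint-weight bound for the elementary integral
`∫_{k/m}^{(k+1)/m} (S_k − t) g(t) dt` with `S_k = (2k+1)/(2m)` the midpoint, when
`α ≤ g ≤ β` on `[0,1]`. -/
theorem refined_taylor_stmt5 (m : ℕ) (hm : 1 ≤ m) (k : ℕ) (hk : k < m)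
    (g : ℝ → ℝ) (hg : ContinuousOn g (Set.Icc (0 : ℝ) 1))
    (α β : ℝ)
    (hb : ∀ t ∈ Set.Icc (0 : ℝ) 1, α ≤ g t ∧ g t ≤ β) :
    (α - β) / (8 * (m : ℝ) ^ 2) ≤
      (∫ t in ((k : ℝ) / (m : ℝ))..(((k : ℝ) + 1) / (m : ℝ)),
        ((2 * (k : ℝ) + 1) / (2 * (m : ℝ)) - t) * g t) ∧
    (∫ t in ((k : ℝ) / (m : ℝ))..(((k : ℝ) + 1) / (m : ℝ)),
        ((2 * (k : ℝ) + 1) / (2 * (m : ℝ)) - t) * g t) ≤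
      (β - α) / (8 * (m : ℝ) ^ 2) := by
  have hm0 : (0 : ℝ) < m := by exact_mod_cast hm
  have hkm : (k : ℝ) + 1 ≤ m := by exact_mod_cast hk
  have ha : (k : ℝ) / m = (2 * (k : ℝ) + 1) / (2 * m) - 1 / (2 * m) := by field_simp; ring
  have hb' : ((k : ℝ) + 1) / m = (2 * (k : ℝ) + 1) / (2 * m) + 1 / (2 * m) := by
    field_simp; ring
  have hsub : Set.Icc ((2 * (k : ℝ) + 1) / (2 * m) - 1 / (2 * m))
      ((2 * (k : ℝ) + 1) / (2 * m) + 1 / (2 * m)) ⊆ Set.Icc (0 : ℝ) 1 := by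
    rw [← ha, ← hb']
    exact Set.Icc_subset_Icc (by positivity) ((div_le_one hm0).2 hkm)
  have hconst (x : ℝ) : x / (8 * (m : ℝ) ^ 2) = x * ((1 / (2 * (m : ℝ))) ^ 2 / 2) := by
    field_simp; norm_num
  have hd : (0 : ℝ) ≤ 1 / (2 * m) := by positivity
  rw [ha, hb', hconst, hconst]
  constructor
  · have h := integral_midpoint_weight_le _ _ hd (fun t => -g t) (hg.mono hsub).neg (-β) (-α)
      fun t ht => ⟨neg_le_neg (hb t (hsub ht)).2, neg_le_neg (hb t (hsub ht)).1⟩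
    simp only [mul_neg, intervalIntegral.integral_neg] at h
    linarith
  · exact integral_midpoint_weight_le _ _ hd g (hg.mono hsub) α β fun t ht => hb t (hsub ht)
end

section
/- Let a < b be real numbers and let f : ℝ → ℝ be twice continuously differentiable on an open interval containing [a,b]. Let Π_{[a,b]}(f)(x) = ((x−b)/(a−b))·f(a) + ((x−a)/(b−a))·f(b) denote the linear interpolation polynomial of f at a and b. Then for every x ∈ [a,b]: Π_{[a,b]}(f)(x) − f(x) = ((f'(b)−f'(a))/(2(b−a)))·(b−x)(x−a) + ((b−x)(x−a)/(b−a))·(ε_b − ε_a), where ε_a = ∫₀¹ (1/2 − t)·(a−x)·f''(x + t(a−x)) dt and ε_b = ∫₀¹ (1/2 − t)·(b−x)·f''(x + t(b−x)) dt. -/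
/-!
For `y` in the interval, integrating by parts gives the trapezoidal Taylor expansion
`f y - f x = (y - x) * (f' x + f' y) / 2 + (y - x) * ε_y`, where
`ε_y = ∫ t in 0..1, (1/2 - t) * (y - x) * f'' (x + t * (y - x))`
(`mul_integral_refined_remainder`). Adding the expansions at `y = b` and `y = a` with the
barycentric weights `(x - a) / (b - a)` and `(b - x) / (b - a)` of the interpolant, the terms
in `f' x` cancel and the claimed error formula remains.
-/

/-- The trapezoidal Taylor expansion of `f` at `x`, solved for its remainder. The integrand times
`y - x` is the derivative of
`t ↦ (1/2 - t) * (y - x) * f' (x + t * (y - x)) + f (x + t * (y - x))`. -/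
theorem mul_integral_refined_remainder {c d : ℝ} {f : ℝ → ℝ}
    (hf : ContDiffOn ℝ 2 f (Set.Ioo c d)) {x y : ℝ}
    (hx : x ∈ Set.Ioo c d) (hy : y ∈ Set.Ioo c d) :
    (y - x) * (∫ t in (0 : ℝ)..1, (1 / 2 - t) * (y - x) * deriv (deriv f) (x + t * (y - x))) =
      f y - f x - (y - x) * (deriv f x + deriv f y) / 2 := by
  have hf1 : ContDiffOn ℝ 1 (deriv f) (Set.Ioo c d) :=
    ((contDiffOn_succ_iff_deriv_of_isOpen (n := 1) isOpen_Ioo).1 hf).2.2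
  have hf2 : ContinuousOn (deriv (deriv f)) (Set.Ioo c d) :=
    hf1.continuousOn_deriv_of_isOpen isOpen_Ioo le_rfl
  have hmem : ∀ t ∈ Set.uIcc (0 : ℝ) 1, x + t * (y - x) ∈ Set.Ioo c d := fun t ht => by
    rw [Set.uIcc_of_le zero_le_one] at ht
    exact (convex_Ioo c d).add_smul_sub_mem hx hy ht
  have hD : ∀ t ∈ Set.uIcc (0 : ℝ) 1,
      HasDerivAt (fun t => (1 / 2 - t) * (y - x) * deriv f (x + t * (y - x)) + f (x + t * (y - x)))
        ((y - x) * ((1 / 2 - t) * (y - x) * deriv (deriv f) (x + t * (y - x)))) t := by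
    intro t ht
    have hn := isOpen_Ioo.mem_nhds (hmem t ht)
    have h0 := ((hf.differentiableOn (by norm_num)).differentiableAt hn).hasDerivAt
    have h1 := ((hf1.differentiableOn (by norm_num)).differentiableAt hn).hasDerivAt
    have hl : HasDerivAt (fun t : ℝ => x + t * (y - x)) (1 * (y - x)) t :=
      ((hasDerivAt_id t).mul_const (y - x)).const_add x
    have hc : HasDerivAt (fun t : ℝ => (1 / 2 - t) * (y - x)) (-1 * (y - x)) t :=
      ((hasDerivAt_id t).const_sub (1 / 2)).mul_const (y - x)
    refine ((hc.mul (h1.comp t hl)).add (h0.comp t hl)).congr_deriv ?_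
    simp only [Function.comp_apply]
    ring
  have hcont : ContinuousOn
      (fun t => (y - x) * ((1 / 2 - t) * (y - x) * deriv (deriv f) (x + t * (y - x))))
      (Set.uIcc (0 : ℝ) 1) := by
    have := hf2.comp (f := fun t : ℝ => x + t * (y - x)) (by fun_prop) hmem
    exact continuousOn_const.mul (ContinuousOn.mul (by fun_prop) this)
  rw [← intervalIntegral.integral_const_mul,
    intervalIntegral.integral_eq_sub_of_hasDerivAt hD hcont.intervalIntegrable]
  simp only [one_mul, zero_mul, add_zero, add_sub_cancel]
  ring

/-- Refined Taylor paper, Eq. (Error_P1_V00): exact representation of the linear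
interpolation error via the refined two-point expansion remainders. -/
theorem refined_taylor_stmt7 (a b : ℝ) (hab : a < b)
    (c d : ℝ) (hca : c < a) (hbd : b < d)
    (f : ℝ → ℝ) (hf : ContDiffOn ℝ 2 f (Set.Ioo c d)) :
    ∀ x ∈ Set.Icc a b,
      ((x - b) / (a - b)) * f a + ((x - a) / (b - a)) * f b - f x =
        ((deriv f b - deriv f a) / (2 * (b - a))) * ((b - x) * (x - a)) +
        ((b - x) * (x - a) / (b - a)) *
          ((∫ t in (0 : ℝ)..1, (1 / 2 - t) * (b - x) * deriv (deriv f) (x + t * (b - x))) -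
           (∫ t in (0 : ℝ)..1, (1 / 2 - t) * (a - x) * deriv (deriv f) (x + t * (a - x)))) := by
  intro x hx
  have hmem : ∀ {z}, z ∈ Set.Icc a b → z ∈ Set.Ioo c d := fun hz =>
    ⟨hca.trans_le hz.1, hz.2.trans_lt hbd⟩
  have hEb := mul_integral_refined_remainder hf (hmem hx) (hmem (Set.right_mem_Icc.2 hab.le))
  have hEa := mul_integral_refined_remainder hf (hmem hx) (hmem (Set.left_mem_Icc.2 hab.le))
  generalize (∫ t in (0 : ℝ)..1, (1 / 2 - t) * (b - x) * deriv (deriv f) (x + t * (b - x)))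
    = Eb at *
  generalize (∫ t in (0 : ℝ)..1, (1 / 2 - t) * (a - x) * deriv (deriv f) (x + t * (a - x)))
    = Ea at *
  have h1 : b - a ≠ 0 := sub_ne_zero.2 hab.ne'
  have h2 : (x - b) / (a - b) = (b - x) / (b - a) := by
    rw [← neg_sub b x, ← neg_sub b a, neg_div_neg_eq]
  rw [h2]
  field_simp
  linear_combination (-2 * (x - a)) * hEb - 2 * (b - x) * hEa
end

section
/- Let a < b and Λ > 0 be real numbers, and let f : ℝ → ℝ be twice continuously differentiable on an open interval containing [a,b], with f''(x) ≥ 0 and Λ·|f'(x)| ≤ f''(x) for all x ∈ [a,b]. Then for every x ∈ [a,b]: f(x) ≥ max( f(a) + (f'(a)/Λ)·(e^{Λ(x−a)} − 1), f(a) − (f'(a)/Λ)·(e^{−Λ(x−a)} − 1) ). -/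
/-!
The bound `Λ|f'| ≤ f''` gives `f'' ≥ μ f'` for both `μ = Λ` and `μ = -Λ`, and each of these yields
one entry of the maximum. If `f'' ≥ μ f'`, then `e^{-μ(t-a)} f'(t)` is nondecreasing, so
`f'(t) ≥ f'(a) e^{μ(t-a)}`; integrating from `a` to `x`, that is, using that
`f(t) - (f'(a)/μ) e^{μ(t-a)}` is nondecreasing, gives the claim (`exp_lower_bound`).
-/

/-- Grönwall-type comparison with the solution of `y'' = μ y'` having the same value and slope at
`a`; the sign of `μ` is arbitrary. -/
theorem exp_lower_bound {a b μ : ℝ} (hμ : μ ≠ 0) {f f' f'' : ℝ → ℝ}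
    (hf : ∀ x ∈ Set.Icc a b, HasDerivAt f (f' x) x)
    (hf' : ∀ x ∈ Set.Icc a b, HasDerivAt f' (f'' x) x)
    (h : ∀ x ∈ Set.Icc a b, μ * f' x ≤ f'' x) {x : ℝ} (hx : x ∈ Set.Icc a b) :
    f a + f' a / μ * (Real.exp (μ * (x - a)) - 1) ≤ f x := by
  have ha : a ∈ Set.Icc a b := ⟨le_rfl, hx.1.trans hx.2⟩
  have hexp : ∀ ν t : ℝ,
      HasDerivAt (fun s => Real.exp (ν * (s - a))) (Real.exp (ν * (t - a)) * ν) t := by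
    intro ν t
    simpa using (((hasDerivAt_id t).sub_const a).const_mul ν).exp
  have hg : ∀ t ∈ Set.Icc a b, HasDerivAt (fun s => Real.exp (-μ * (s - a)) * f' s)
      (Real.exp (-μ * (t - a)) * (-μ) * f' t + Real.exp (-μ * (t - a)) * f'' t) t :=
    fun t ht => (hexp (-μ) t).mul (hf' t ht)
  have hgmono : MonotoneOn (fun s => Real.exp (-μ * (s - a)) * f' s) (Set.Icc a b) := by
    refine monotoneOn_of_hasDerivWithinAt_nonneg (convex_Icc a b)
      (fun t ht => (hg t ht).continuousAt.continuousWithinAt)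
      (fun t ht => (hg t (interior_subset ht)).hasDerivWithinAt) fun t ht => ?_
    have := mul_nonneg (Real.exp_pos (-μ * (t - a))).le
      (sub_nonneg.2 (h t (interior_subset ht)))
    linarith
  have hslope : ∀ t ∈ Set.Icc a b, f' a * Real.exp (μ * (t - a)) ≤ f' t := by
    intro t ht
    have h1 : f' a ≤ Real.exp (-μ * (t - a)) * f' t := by simpa using hgmono ha ht ht.1
    have h2 : Real.exp (-μ * (t - a)) * Real.exp (μ * (t - a)) = 1 := by
      rw [← Real.exp_add, neg_mul, neg_add_cancel, Real.exp_zero]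
    calc f' a * Real.exp (μ * (t - a))
        ≤ Real.exp (-μ * (t - a)) * f' t * Real.exp (μ * (t - a)) := by gcongr
      _ = f' t := by rw [mul_right_comm, h2, one_mul]
  have hk : ∀ t ∈ Set.Icc a b, HasDerivAt (fun s => f s - f' a / μ * Real.exp (μ * (s - a)))
      (f' t - f' a / μ * (Real.exp (μ * (t - a)) * μ)) t :=
    fun t ht => (hf t ht).sub ((hexp μ t).const_mul _)
  have hkmono : MonotoneOn (fun s => f s - f' a / μ * Real.exp (μ * (s - a))) (Set.Icc a b) := by
    refine monotoneOn_of_hasDerivWithinAt_nonneg (convex_Icc a b)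
      (fun t ht => (hk t ht).continuousAt.continuousWithinAt)
      (fun t ht => (hk t (interior_subset ht)).hasDerivWithinAt) fun t ht => ?_
    have h1 := hslope t (interior_subset ht)
    have h2 : f' a / μ * (Real.exp (μ * (t - a)) * μ) = f' a * Real.exp (μ * (t - a)) := by
      field_simp
    linarith
  have hfin := hkmono ha hx hx.1
  simp only [sub_self, mul_zero, Real.exp_zero] at hfin
  linarith

/-- Refined Taylor paper, Lemma 3: a necessary condition for the differential
inequality `Λ|f'| ≤ f''` on `[a,b]`:
`f(x) ≥ max(f(a) + (f'(a)/Λ)(e^{Λ(x−a)} − 1), f(a) − (f'(a)/Λ)(e^{−Λ(x−a)} − 1))`. -/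
theorem refined_taylor_stmt10 (a b Λ : ℝ) (hab : a < b) (hΛ : 0 < Λ)
    (c d : ℝ) (hca : c < a) (hbd : b < d)
    (f : ℝ → ℝ) (hf : ContDiffOn ℝ 2 f (Set.Ioo c d))
    (hconv : ∀ x ∈ Set.Icc a b, 0 ≤ deriv (deriv f) x)
    (hineq : ∀ x ∈ Set.Icc a b, Λ * |deriv f x| ≤ deriv (deriv f) x) :
    ∀ x ∈ Set.Icc a b,
      max (f a + (deriv f a / Λ) * (Real.exp (Λ * (x - a)) - 1))
          (f a - (deriv f a / Λ) * (Real.exp (-Λ * (x - a)) - 1)) ≤ f x := by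
  intro x hx
  have hsub : ∀ t ∈ Set.Icc a b, Set.Ioo c d ∈ nhds t := fun t ht =>
    Ioo_mem_nhds (hca.trans_le ht.1) (ht.2.trans_lt hbd)
  have h1 : ∀ t ∈ Set.Icc a b, HasDerivAt f (deriv f t) t := fun t ht =>
    ((hf.differentiableOn (by norm_num)).differentiableAt (hsub t ht)).hasDerivAt
  have hf' : ContDiffOn ℝ 1 (deriv f) (Set.Ioo c d) :=
    hf.deriv_of_isOpen isOpen_Ioo (by norm_num)
  have h2 : ∀ t ∈ Set.Icc a b, HasDerivAt (deriv f) (deriv (deriv f) t) t := fun t ht =>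
    ((hf'.differentiableOn (by norm_num)).differentiableAt (hsub t ht)).hasDerivAt
  refine max_le ?_ ?_
  · exact exp_lower_bound hΛ.ne' h1 h2 (fun t ht =>
      (mul_le_mul_of_nonneg_left (le_abs_self _) hΛ.le).trans (hineq t ht)) hx
  · have := exp_lower_bound (neg_ne_zero.2 hΛ.ne') h1 h2 (fun t ht => by
      have := mul_le_mul_of_nonneg_left (neg_le_abs (deriv f t)) hΛ.le
      linarith [hineq t ht]) hx
    rwa [div_neg, neg_mul, ← sub_eq_add_neg] at this
end

section
/- Let a < b, Λ > 0 and δ > 0 be real numbers, and let c ∈ ℝ satisfy c ≥ −δ/(2Λ). Define f : ℝ → ℝ by f(x) = f(a) + (c/Λ)·(e^{Λ(x−a)} − 1) + (δ/Λ)·[ (e^{Λ(x−a)} − 1)/Λ − (x−a) ] (for any fixed value f(a) ∈ ℝ). Then f is twice differentiable, satisfies f''(x) − Λ·f'(x) = δ and f'(a) = c, and for every x ∈ [a,b] (with x ≥ a): f''(x) ≥ 0 and Λ·|f'(x)| ≤ f''(x). -/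
/-! With `E x = exp (Λ (x - a))` one has `f'' = (Λ c + δ) E` and `Λ f' = f'' - δ`. Hence
`Λ f' ≤ f''` is clear, while `-Λ f' ≤ f''` amounts to `δ ≤ 2 (Λ c + δ) E`. The latter holds for
`x ≥ a` since there `E ≥ 1`, and the bound on `c` says exactly that `δ ≤ 2 (Λ c + δ)`. -/

/-- Refined Taylor paper, Lemma 4: the solution of `f'' − Λf' = δ`, `f'(a) = c`
with `c ≥ −δ/(2Λ)` is convex on `[a,b]` and satisfies `Λ|f'| ≤ f''` there. -/
theorem refined_taylor_stmt11 (a b Λ δ : ℝ) (hab : a < b) (hΛ : 0 < Λ) (hδ : 0 < δ)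
    (c : ℝ) (hc : c ≥ -δ / (2 * Λ)) (fa : ℝ)
    (f : ℝ → ℝ)
    (hfdef : ∀ x : ℝ, f x = fa + (c / Λ) * (Real.exp (Λ * (x - a)) - 1) +
      (δ / Λ) * ((Real.exp (Λ * (x - a)) - 1) / Λ - (x - a))) :
    (∀ x : ℝ, DifferentiableAt ℝ f x ∧ DifferentiableAt ℝ (deriv f) x) ∧
    (∀ x : ℝ, deriv (deriv f) x - Λ * deriv f x = δ) ∧
    deriv f a = c ∧
    (∀ x ∈ Set.Icc a b,
      0 ≤ deriv (deriv f) x ∧ Λ * |deriv f x| ≤ deriv (deriv f) x) := by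
  have hE : ∀ x : ℝ, HasDerivAt (fun y => Real.exp (Λ * (y - a)))
      (Real.exp (Λ * (x - a)) * Λ) x := by
    intro x
    have h := (((hasDerivAt_id x).sub_const a).const_mul Λ).exp
    simpa using h
  have h1 : ∀ x : ℝ, HasDerivAt f
      ((c + δ / Λ) * Real.exp (Λ * (x - a)) - δ / Λ) x := by
    intro x
    rw [funext hfdef]
    have h := ((((hE x).sub_const 1).const_mul (c / Λ)).const_add fa).add
      (((((hE x).sub_const 1).div_const Λ).sub ((hasDerivAt_id x).sub_const a)).const_mul (δ / Λ))
    refine h.congr_deriv ?_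
    field_simp
    ring
  have hd1 : deriv f = fun x => (c + δ / Λ) * Real.exp (Λ * (x - a)) - δ / Λ :=
    funext fun x => (h1 x).deriv
  have h2 : ∀ x : ℝ, HasDerivAt (deriv f) ((Λ * c + δ) * Real.exp (Λ * (x - a))) x := by
    intro x
    rw [hd1]
    refine (((hE x).const_mul (c + δ / Λ)).sub_const (δ / Λ)).congr_deriv ?_
    field_simp
  have hode : ∀ x : ℝ, deriv (deriv f) x - Λ * deriv f x = δ := by
    intro x
    rw [(h2 x).deriv, (h1 x).deriv]
    field_simp
    ring
  refine ⟨fun x => ⟨(h1 x).differentiableAt, (h2 x).differentiableAt⟩, hode, ?_, ?_⟩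
  · rw [(h1 a).deriv]
    simp
  · rintro x ⟨hx, -⟩
    have hE1 : 1 ≤ Real.exp (Λ * (x - a)) :=
      Real.one_le_exp (mul_nonneg hΛ.le (sub_nonneg.2 hx))
    have hc' : δ ≤ 2 * (Λ * c + δ) := by
      have h := (div_le_iff₀ (by positivity : 0 < 2 * Λ)).1 hc
      linarith
    have hdd : δ ≤ 2 * deriv (deriv f) x := by
      rw [(h2 x).deriv]
      nlinarith
    have ho := hode x
    refine ⟨by linarith, ?_⟩
    rw [← abs_of_pos hΛ, ← abs_mul, abs_le]
    constructor <;> linarith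
end

section
/- Let A₁, …, A_{n+1} be n+1 affinely independent points of ℝ^n, let λ₁, …, λ_{n+1} : ℝ^n → ℝ be the associated barycentric coordinate functions (so Σᵢ λᵢ(P) = 1 and Σᵢ λᵢ(P)·Aᵢ = P for all P), and let S be the convex hull of {A₁, …, A_{n+1}}. Let v : ℝ^n → ℝ be twice continuously differentiable on an open set containing S, and define the linear interpolant π_S(v)(P) = Σ_{i=1}^{n+1} λᵢ(P)·v(Aᵢ). Then for every P ∈ S: π_S(v)(P) − v(P) = Σ_{i=1}^{n+1} λᵢ(P) · ∫₀¹ (1−t) · D²v(P + t(Aᵢ−P))(Aᵢ−P, Aᵢ−P) dt. -/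
/-!
Along each segment from `P` to a vertex `A i`, Taylor's formula with integral remainder
(`taylor_segment`) expresses the integral as `v (A i) - v P - Dv(P)(A i - P)`. Averaging with the
weights `lam i P`, the constant terms sum to `v P` because the weights sum to one, and the
first-order terms cancel because `∑ i, lam i P • (A i - P) = 0`.
-/

/-- Second-order Taylor formula with integral remainder along the segment from `P` to `P + w`. -/
lemma taylor_segment {E : Type*} [NormedAddCommGroup E] [NormedSpace ℝ E]
    {U : Set E} (hU : IsOpen U) {v : E → ℝ} (hv : ContDiffOn ℝ 2 v U) {P w : E}
    (hseg : ∀ t ∈ Set.Icc (0 : ℝ) 1, P + t • w ∈ U) :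
    ∫ t in (0 : ℝ)..1, (1 - t) * fderiv ℝ (fderiv ℝ v) (P + t • w) w w =
      v (P + w) - v P - fderiv ℝ v P w := by
  have hv1 : ContDiffOn ℝ 1 (fderiv ℝ v) U := hv.fderiv_of_isOpen hU (by norm_num)
  have hv2 : ContinuousOn (fderiv ℝ (fderiv ℝ v)) U :=
    hv1.continuousOn_fderiv_of_isOpen hU (by norm_num)
  have hline : ∀ t : ℝ, HasDerivAt (fun t : ℝ => P + t • w) w t := fun t => by
    simpa using ((hasDerivAt_id t).smul_const w).const_add P
  -- `(1 - t) g'(t) + g(t)` with `g(t) = v (P + t w)` is a primitive of `(1 - t) g''(t)`.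
  have hprim : ∀ t ∈ Set.uIcc (0 : ℝ) 1,
      HasDerivAt (fun t : ℝ => (1 - t) * fderiv ℝ v (P + t • w) w + v (P + t • w))
        ((1 - t) * fderiv ℝ (fderiv ℝ v) (P + t • w) w w) t := by
    intro t ht
    rw [Set.uIcc_of_le zero_le_one] at ht
    have hnhds := hU.mem_nhds (hseg t ht)
    have h0 : HasDerivAt (fun t : ℝ => v (P + t • w)) (fderiv ℝ v (P + t • w) w) t :=
      ((hv.contDiffAt hnhds).differentiableAt (by norm_num)).hasFDerivAt.comp_hasDerivAt t
        (hline t)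
    have h1 : HasDerivAt (fun t : ℝ => fderiv ℝ v (P + t • w))
        (fderiv ℝ (fderiv ℝ v) (P + t • w) w) t :=
      ((hv1.contDiffAt hnhds).differentiableAt (by norm_num)).hasFDerivAt.comp_hasDerivAt t
        (hline t)
    have h2 : HasDerivAt (fun t : ℝ => fderiv ℝ v (P + t • w) w)
        (fderiv ℝ (fderiv ℝ v) (P + t • w) w w) t := by
      simpa using h1.clm_apply (hasDerivAt_const t w)
    have h3 : HasDerivAt (fun t : ℝ => 1 - t) (-1) t := by
      simpa using (hasDerivAt_id t).const_sub 1
    refine ((h3.mul h2).add h0).congr_deriv ?_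
    ring
  have hcont : ContinuousOn
      (fun t : ℝ => (1 - t) * fderiv ℝ (fderiv ℝ v) (P + t • w) w w) (Set.uIcc 0 1) := by
    rw [Set.uIcc_of_le zero_le_one]
    have hc : ContinuousOn (fun t : ℝ => fderiv ℝ (fderiv ℝ v) (P + t • w)) (Set.Icc 0 1) :=
      hv2.comp (by fun_prop) hseg
    exact (by fun_prop : ContinuousOn (fun t : ℝ => 1 - t) (Set.Icc 0 1)).mul
      ((hc.clm_apply continuousOn_const).clm_apply continuousOn_const)
  rw [intervalIntegral.integral_eq_sub_of_hasDerivAt hprim hcont.intervalIntegrable]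
  simp
  ring

/-- Refined Taylor paper, proof of Lemma 5 (first part): exact integral representation
of the linear interpolation error on an `n`-simplex, via the classical Taylor formula. -/
theorem refined_taylor_stmt12 {n : ℕ}
    (A : Fin (n + 1) → EuclideanSpace ℝ (Fin n))
    (hA : AffineIndependent ℝ A)
    (lam : Fin (n + 1) → EuclideanSpace ℝ (Fin n) → ℝ)
    (hsum : ∀ P : EuclideanSpace ℝ (Fin n), ∑ i, lam i P = 1)
    (hbary : ∀ P : EuclideanSpace ℝ (Fin n), ∑ i, lam i P • A i = P)
    (U : Set (EuclideanSpace ℝ (Fin n))) (hUopen : IsOpen U)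
    (hSU : convexHull ℝ (Set.range A) ⊆ U)
    (v : EuclideanSpace ℝ (Fin n) → ℝ) (hv : ContDiffOn ℝ 2 v U) :
    ∀ P ∈ convexHull ℝ (Set.range A),
      (∑ i, lam i P * v (A i)) - v P =
      ∑ i, lam i P *
        ∫ t in (0 : ℝ)..1,
          (1 - t) * fderiv ℝ (fderiv ℝ v) (P + t • (A i - P)) (A i - P) (A i - P) := by
  intro P hP
  have htaylor : ∀ i, ∫ t in (0 : ℝ)..1,
      (1 - t) * fderiv ℝ (fderiv ℝ v) (P + t • (A i - P)) (A i - P) (A i - P) =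
        v (A i) - v P - fderiv ℝ v P (A i - P) := by
    intro i
    have hAi : A i ∈ convexHull ℝ (Set.range A) := subset_convexHull ℝ _ ⟨i, rfl⟩
    have h := taylor_segment (P := P) (w := A i - P) hUopen hv fun t ht =>
      hSU ((convex_convexHull ℝ _).add_smul_sub_mem hP hAi ht)
    rwa [add_sub_cancel] at h
  have hfirst : ∑ i, lam i P * fderiv ℝ v P (A i - P) = 0 := by
    have hzero : ∑ i, lam i P • (A i - P) = 0 := by
      simp_rw [smul_sub]
      rw [Finset.sum_sub_distrib, ← Finset.sum_smul, hsum, hbary, one_smul, sub_self]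
    simpa only [map_sum, map_smul, smul_eq_mul, map_zero] using congrArg (fderiv ℝ v P) hzero
  simp_rw [htaylor, mul_sub (lam _ P) _ (fderiv ℝ v P _), mul_sub (lam _ P) _ (v P)]
  rw [Finset.sum_sub_distrib, Finset.sum_sub_distrib, hfirst, ← Finset.sum_mul, hsum]
  ring
end

section
/- Let A₁, …, A_{n+1} be n+1 affinely independent points of ℝ^n, let λ₁, …, λ_{n+1} : ℝ^n → ℝ be the associated barycentric coordinate functions, let S be the convex hull of {A₁, …, A_{n+1}}, and let diam(S) be the diameter of S. Let v : ℝ^n → ℝ be twice continuously differentiable on an open set containing S, with ‖D²v‖_∞ = sup_{Q∈S} ‖D²v(Q)‖ (operator norm of the bilinear form). Define π_S(v)(P) = Σ_{i=1}^{n+1} λᵢ(P)·v(Aᵢ). Then for every P ∈ S: |π_S(v)(P) − v(P)| ≤ (‖D²v‖_∞ / 2) · diam(S)². -/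
/-!
Expand `v` to first order at `P`: `v (A i) = v P + Dv(P)(A i - P) + R i`, where
`|R i| ≤ (M / 2) ‖A i - P‖²` and `M` is the supremum of `‖D²v‖` over the simplex
(`abs_taylor_one_remainder_le`). Averaging with the barycentric weights at `P`, the linear terms
cancel because `∑ λ i (A i - P) = 0`, so the interpolation error is `∑ λ i * R i`. The weights are
nonnegative on the simplex (`barycentric_nonneg`) and sum to one, and `‖A i - P‖` is at most the
diameter.
-/

/-- First-order Taylor estimate with sharp constant `M / 2` on a convex set. -/
theorem abs_taylor_one_remainder_le {E : Type*} [NormedAddCommGroup E] [NormedSpace ℝ E]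
    {S : Set E} (hS : Convex ℝ S) {v : E → ℝ} {M : ℝ}
    (hv : ∀ x ∈ S, DifferentiableAt ℝ v x)
    (hv' : ∀ x ∈ S, DifferentiableAt ℝ (fderiv ℝ v) x)
    (hM : ∀ x ∈ S, ‖fderiv ℝ (fderiv ℝ v) x‖ ≤ M)
    {x y : E} (hx : x ∈ S) (hy : y ∈ S) :
    |v y - v x - fderiv ℝ v x (y - x)| ≤ M / 2 * ‖y - x‖ ^ 2 := by
  set h := y - x with hh
  have hmem : ∀ t ∈ Set.Icc (0 : ℝ) 1, x + t • h ∈ S := fun t ht =>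
    hS.add_smul_sub_mem hx hy ht
  have hderiv : ∀ t ∈ Set.Icc (0 : ℝ) 1,
      HasDerivAt (fun t : ℝ => v (x + t • h) - v x - t * fderiv ℝ v x h)
        (fderiv ℝ v (x + t • h) h - fderiv ℝ v x h) t := by
    intro t ht
    have hline : HasDerivAt (fun t : ℝ => x + t • h) h t := by
      simpa using ((hasDerivAt_id t).smul_const h).const_add x
    have hcomp : HasDerivAt (fun t : ℝ => v (x + t • h)) (fderiv ℝ v (x + t • h) h) t :=
      (hv _ (hmem t ht)).hasFDerivAt.comp_hasDerivAt t hline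
    have hlin : HasDerivAt (fun t : ℝ => t * fderiv ℝ v x h) (fderiv ℝ v x h) t := by
      simpa using (hasDerivAt_id t).mul_const (fderiv ℝ v x h)
    exact (hcomp.sub_const (v x)).sub hlin
  have hB : ∀ t : ℝ, HasDerivAt (fun t : ℝ => M / 2 * ‖h‖ ^ 2 * t ^ 2) (M * ‖h‖ ^ 2 * t) t := by
    intro t
    refine ((hasDerivAt_pow 2 t).const_mul (M / 2 * ‖h‖ ^ 2)).congr_deriv ?_
    simp only [Nat.cast_ofNat]
    ring
  have key := image_norm_le_of_norm_deriv_right_le_deriv_boundary (a := (0 : ℝ)) (b := 1)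
    (fun t ht => (hderiv t ht).continuousAt.continuousWithinAt)
    (fun t ht => (hderiv t (Set.Ico_subset_Icc_self ht)).hasDerivWithinAt)
    (by simp) hB ?_ (Set.right_mem_Icc.mpr zero_le_one)
  · simpa [hh] using key
  · intro t ht
    have hlip := hS.norm_image_sub_le_of_norm_fderiv_le hv' hM hx
      (hmem t (Set.Ico_subset_Icc_self ht))
    rw [add_sub_cancel_left, norm_smul, Real.norm_of_nonneg ht.1] at hlip
    calc ‖fderiv ℝ v (x + t • h) h - fderiv ℝ v x h‖
        = ‖(fderiv ℝ v (x + t • h) - fderiv ℝ v x) h‖ := by simp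
      _ ≤ ‖fderiv ℝ v (x + t • h) - fderiv ℝ v x‖ * ‖h‖ := ContinuousLinearMap.le_opNorm _ _
      _ ≤ M * (t * ‖h‖) * ‖h‖ := by gcongr
      _ = M * ‖h‖ ^ 2 * t := by ring

/-- Affine independence makes affine weights unique, so any weights representing a point of the
simplex coincide with convex ones. -/
theorem barycentric_nonneg {ι E : Type*} [Fintype ι] [AddCommGroup E] [Module ℝ E]
    {A : ι → E} (hA : AffineIndependent ℝ A) {w : ι → ℝ} (hw : ∑ i, w i = 1)
    (hP : ∑ i, w i • A i ∈ convexHull ℝ (Set.range A)) (i : ι) : 0 ≤ w i := by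
  rw [convexHull_range_eq_exists_affineCombination] at hP
  obtain ⟨s, u, hu0, hu1, hu⟩ := hP
  rw [← Finset.univ.affineCombination_eq_linear_combination A w hw] at hu
  have heq := (affineIndependent_iff_indicator_eq_of_affineCombination_eq ℝ A).1 hA
    s Finset.univ u w hu1 hw hu
  rw [Finset.coe_univ, Set.indicator_univ] at heq
  rw [← heq]
  exact Set.indicator_apply_nonneg (fun hi => hu0 i hi)

/-- Refined Taylor paper, Lemma 5, estimate (local_interpolation_error_1_V0):
classical interpolation error bound `|π_S(v)(P) − v(P)| ≤ ‖D²v‖_∞ diam(S)² / 2`. -/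
theorem refined_taylor_stmt13 {n : ℕ}
    (A : Fin (n + 1) → EuclideanSpace ℝ (Fin n))
    (hA : AffineIndependent ℝ A)
    (lam : Fin (n + 1) → EuclideanSpace ℝ (Fin n) → ℝ)
    (hsum : ∀ P : EuclideanSpace ℝ (Fin n), ∑ i, lam i P = 1)
    (hbary : ∀ P : EuclideanSpace ℝ (Fin n), ∑ i, lam i P • A i = P)
    (U : Set (EuclideanSpace ℝ (Fin n))) (hUopen : IsOpen U)
    (hSU : convexHull ℝ (Set.range A) ⊆ U)
    (v : EuclideanSpace ℝ (Fin n) → ℝ) (hv : ContDiffOn ℝ 2 v U) :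
    ∀ P ∈ convexHull ℝ (Set.range A),
      |(∑ i, lam i P * v (A i)) - v P| ≤
        ((⨆ Q : convexHull ℝ (Set.range A), ‖fderiv ℝ (fderiv ℝ v) Q‖) / 2) *
          Metric.diam (convexHull ℝ (Set.range A)) ^ 2 := by
  intro P hP
  set S := convexHull ℝ (Set.range A) with hSdef
  have hScomp : IsCompact S := (Set.finite_range A).isCompact_convexHull ℝ
  have hdv : ContDiffOn ℝ 1 (fderiv ℝ v) U := hv.fderiv_of_isOpen hUopen (by norm_num)
  have hddv : ContinuousOn (fderiv ℝ (fderiv ℝ v)) U :=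
    hdv.continuousOn_fderiv_of_isOpen hUopen le_rfl
  -- Without boundedness, the real-valued supremum would take its junk value `0`.
  have hbdd : BddAbove (Set.range fun Q : S => ‖fderiv ℝ (fderiv ℝ v) Q‖) := by
    have hcont : ContinuousOn (fun Q => ‖fderiv ℝ (fderiv ℝ v) Q‖) S :=
      ContinuousOn.norm (f := fderiv ℝ (fderiv ℝ v)) (hddv.mono hSU)
    have himage := hScomp.bddAbove_image hcont
    rwa [Set.image_eq_range] at himage
  set M := ⨆ Q : S, ‖fderiv ℝ (fderiv ℝ v) Q‖ with hMdef
  have hM : ∀ Q ∈ S, ‖fderiv ℝ (fderiv ℝ v) Q‖ ≤ M := fun Q hQ => le_ciSup hbdd ⟨Q, hQ⟩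
  have hM0 : 0 ≤ M := (norm_nonneg (fderiv ℝ (fderiv ℝ v) P)).trans (hM P hP)
  have hAS : ∀ i, A i ∈ S := fun i => subset_convexHull ℝ _ (Set.mem_range_self i)
  have hlam : ∀ i, 0 ≤ lam i P :=
    barycentric_nonneg hA (hsum P) (by rw [hbary P]; exact hP)
  have hR : ∀ i, |v (A i) - v P - fderiv ℝ v P (A i - P)| ≤ M / 2 * Metric.diam S ^ 2 := by
    intro i
    refine (abs_taylor_one_remainder_le (convex_convexHull ℝ _)
      (fun x hx => (hv.differentiableOn (by norm_num)).differentiableAt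
        (hUopen.mem_nhds (hSU hx)))
      (fun x hx => (hdv.differentiableOn (by norm_num)).differentiableAt
        (hUopen.mem_nhds (hSU hx))) hM hP (hAS i)).trans ?_
    have hd : ‖A i - P‖ ≤ Metric.diam S := by
      rw [← dist_eq_norm]
      exact Metric.dist_le_diam_of_mem hScomp.isBounded (hAS i) hP
    gcongr
  have hlin : ∑ i, lam i P * fderiv ℝ v P (A i - P) = 0 := by
    have hzero : ∑ i, lam i P • (A i - P) = 0 := by
      simp only [smul_sub, Finset.sum_sub_distrib]
      rw [hbary P, ← Finset.sum_smul, hsum P, one_smul, sub_self]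
    simpa only [map_sum, map_smul, smul_eq_mul, map_zero] using congrArg (fderiv ℝ v P) hzero
  have herr : (∑ i, lam i P * v (A i)) - v P
      = ∑ i, lam i P * (v (A i) - v P - fderiv ℝ v P (A i - P)) := by
    simp only [mul_sub, Finset.sum_sub_distrib] at hlin ⊢
    rw [hlin, ← Finset.sum_mul, hsum P, one_mul, sub_zero]
  rw [herr]
  calc |∑ i, lam i P * (v (A i) - v P - fderiv ℝ v P (A i - P))|
      ≤ ∑ i, |lam i P * (v (A i) - v P - fderiv ℝ v P (A i - P))| :=
        Finset.abs_sum_le_sum_abs _ _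
    _ ≤ ∑ i, lam i P * (M / 2 * Metric.diam S ^ 2) := by
        refine Finset.sum_le_sum fun i _ => ?_
        rw [abs_mul, abs_of_nonneg (hlam i)]
        exact mul_le_mul_of_nonneg_left (hR i) (hlam i)
    _ = M / 2 * Metric.diam S ^ 2 := by rw [← Finset.sum_mul, hsum P, one_mul]
end

section
/- Let A₁, …, A_{n+1} be n+1 affinely independent points of ℝ^n, let λ₁, …, λ_{n+1} : ℝ^n → ℝ be the associated barycentric coordinate functions, and let S be the convex hull of {A₁, …, A_{n+1}}. Let v : ℝ^n → ℝ be twice continuously differentiable on an open set containing S. Define π_S(v)(P) = Σ_{i=1}^{n+1} λᵢ(P)·v(Aᵢ) and the corrected interpolant π*_S(v)(P) = π_S(v)(P) − (1/2)·Σ_{i=1}^{n+1} λᵢ(P)·Dv(Aᵢ)(Aᵢ−P). Then for every P ∈ S: π*_S(v)(P) − v(P) = Σ_{i=1}^{n+1} λᵢ(P) · ∫₀¹ (1/2 − t) · D²v(P + t(Aᵢ−P))(Aᵢ−P, Aᵢ−P) dt. -/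
/-!
Along a segment from `P` to `P + h`, put `g t = v (P + t • h)`, with first and second derivatives
`g₁` and `g₂`. The function `t ↦ (1/2 - t) * g₁ t + g t` has derivative `(1/2 - t) * g₂ t`, so the
fundamental theorem of calculus gives the two-point expansion
`∫₀¹ (1/2 - t) * g₂ t dt = g 1 - g 0 - (g₁ 1 + g₁ 0) / 2` (`two_point_expansion`).
With `h = A i - P`, weighting by the barycentric coordinates of `P` and summing over `i` yields the
error formula: the terms `Dv(P)(A i - P)` cancel because `∑ i, lam i P • (A i - P) = 0`.
-/

/-- The refined Taylor expansion of `v` on a segment contained in an open set where `v` is `C²`. -/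
theorem two_point_expansion {E : Type*} [NormedAddCommGroup E] [NormedSpace ℝ E]
    {U : Set E} (hU : IsOpen U) {v : E → ℝ} (hv : ContDiffOn ℝ 2 v U) (P h : E)
    (hseg : ∀ t ∈ Set.Icc (0 : ℝ) 1, P + t • h ∈ U) :
    ∫ t in (0 : ℝ)..1, (1 / 2 - t) * fderiv ℝ (fderiv ℝ v) (P + t • h) h h =
      v (P + h) - v P - (1 / 2) * (fderiv ℝ v (P + h) h + fderiv ℝ v P h) := by
  have hdv : ContDiffOn ℝ 1 (fderiv ℝ v) U := hv.fderiv_of_isOpen hU (by norm_num)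
  have hddv : ContinuousOn (fderiv ℝ (fderiv ℝ v)) U :=
    hdv.continuousOn_fderiv_of_isOpen hU le_rfl
  have hline : ∀ t : ℝ, HasDerivAt (fun t : ℝ => P + t • h) h t := fun t => by
    simpa using ((hasDerivAt_id t).smul_const h).const_add P
  have hderiv : ∀ t ∈ Set.uIcc (0 : ℝ) 1,
      HasDerivAt (fun t : ℝ => (1 / 2 - t) * fderiv ℝ v (P + t • h) h + v (P + t • h))
        ((1 / 2 - t) * fderiv ℝ (fderiv ℝ v) (P + t • h) h h) t := by
    intro t ht
    rw [Set.uIcc_of_le zero_le_one] at ht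
    have hmem : U ∈ nhds (P + t • h) := hU.mem_nhds (hseg t ht)
    have h0 : HasDerivAt (fun t : ℝ => v (P + t • h)) (fderiv ℝ v (P + t • h) h) t :=
      ((hv.contDiffAt hmem).differentiableAt (by norm_num)).hasFDerivAt.comp_hasDerivAt t (hline t)
    have h1 : HasDerivAt (fun t : ℝ => fderiv ℝ v (P + t • h))
        (fderiv ℝ (fderiv ℝ v) (P + t • h) h) t :=
      ((hdv.contDiffAt hmem).differentiableAt (by norm_num)).hasFDerivAt.comp_hasDerivAt t (hline t)
    have h2 : HasDerivAt (fun t : ℝ => fderiv ℝ v (P + t • h) h)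
        (fderiv ℝ (fderiv ℝ v) (P + t • h) h h) t := by
      simpa using h1.clm_apply (hasDerivAt_const t h)
    have h3 : HasDerivAt (fun t : ℝ => 1 / 2 - t) (-1) t := (hasDerivAt_id t).const_sub _
    refine ((h3.mul h2).add h0).congr_deriv ?_
    ring
  have hcont : ContinuousOn
      (fun t : ℝ => (1 / 2 - t) * fderiv ℝ (fderiv ℝ v) (P + t • h) h h) (Set.uIcc 0 1) := by
    rw [Set.uIcc_of_le zero_le_one]
    have hc : ContinuousOn (fun t : ℝ => fderiv ℝ (fderiv ℝ v) (P + t • h)) (Set.Icc 0 1) :=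
      hddv.comp (by fun_prop) hseg
    fun_prop
  rw [intervalIntegral.integral_eq_sub_of_hasDerivAt hderiv hcont.intervalIntegrable]
  simp only [one_smul, zero_smul, add_zero]
  ring

/-- Refined Taylor paper, Eq. (EQ2): exact integral representation of the error of the
corrected interpolant `π*_S(v)` obtained from the refined two-point expansion. -/
theorem refined_taylor_stmt14 {n : ℕ}
    (A : Fin (n + 1) → EuclideanSpace ℝ (Fin n))
    (hA : AffineIndependent ℝ A)
    (lam : Fin (n + 1) → EuclideanSpace ℝ (Fin n) → ℝ)
    (hsum : ∀ P : EuclideanSpace ℝ (Fin n), ∑ i, lam i P = 1)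
    (hbary : ∀ P : EuclideanSpace ℝ (Fin n), ∑ i, lam i P • A i = P)
    (U : Set (EuclideanSpace ℝ (Fin n))) (hUopen : IsOpen U)
    (hSU : convexHull ℝ (Set.range A) ⊆ U)
    (v : EuclideanSpace ℝ (Fin n) → ℝ) (hv : ContDiffOn ℝ 2 v U) :
    ∀ P ∈ convexHull ℝ (Set.range A),
      ((∑ i, lam i P * v (A i)) -
        (1 / 2) * ∑ i, lam i P * fderiv ℝ v (A i) (A i - P)) - v P =
      ∑ i, lam i P *
        ∫ t in (0 : ℝ)..1,
          (1 / 2 - t) * fderiv ℝ (fderiv ℝ v) (P + t • (A i - P)) (A i - P) (A i - P) := by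
  intro P hP
  have hexp : ∀ i, ∫ t in (0 : ℝ)..1,
      (1 / 2 - t) * fderiv ℝ (fderiv ℝ v) (P + t • (A i - P)) (A i - P) (A i - P) =
      v (A i) - v P - (1 / 2) * (fderiv ℝ v (A i) (A i - P) + fderiv ℝ v P (A i - P)) := by
    intro i
    have hAi : A i ∈ convexHull ℝ (Set.range A) := subset_convexHull ℝ _ (Set.mem_range_self i)
    have h := two_point_expansion hUopen hv P (A i - P) fun t ht =>
      hSU ((convex_convexHull ℝ _).add_smul_sub_mem hP hAi ht)
    rwa [add_sub_cancel] at h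
  have hzero : ∑ i, lam i P * fderiv ℝ v P (A i - P) = 0 := by
    have h : ∑ i, lam i P • (A i - P) = 0 := by
      simp only [smul_sub, Finset.sum_sub_distrib, ← Finset.sum_smul, hbary, hsum, one_smul,
        sub_self]
    simpa only [map_sum, map_smul, smul_eq_mul, map_zero] using congrArg (fderiv ℝ v P) h
  have hconst : ∑ i, lam i P * v P = v P := by rw [← Finset.sum_mul, hsum, one_mul]
  simp only [hexp]
  have hsplit : ∀ i, lam i P * (v (A i) - v P -
      (1 / 2) * (fderiv ℝ v (A i) (A i - P) + fderiv ℝ v P (A i - P))) =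
      lam i P * v (A i) - lam i P * v P - (1 / 2) * (lam i P * fderiv ℝ v (A i) (A i - P)) -
        (1 / 2) * (lam i P * fderiv ℝ v P (A i - P)) := fun i => by ring
  simp only [hsplit, Finset.sum_sub_distrib, ← Finset.mul_sum, hzero, hconst]
  ring
end

section
/- Let A₁, …, A_{n+1} be n+1 affinely independent points of ℝ^n, let λ₁, …, λ_{n+1} : ℝ^n → ℝ be the associated barycentric coordinate functions, let S be the convex hull of {A₁, …, A_{n+1}}, and let diam(S) be the diameter of S. Let v : ℝ^n → ℝ be twice continuously differentiable on an open set containing S, with ‖Dv‖_∞ = sup_{Q∈S} ‖Dv(Q)‖ and ‖D²v‖_∞ = sup_{Q∈S} ‖D²v(Q)‖. Define π_S(v)(P) = Σ_{i=1}^{n+1} λᵢ(P)·v(Aᵢ). Then for every P ∈ S: |π_S(v)(P) − v(P)| ≤ (‖Dv‖_∞ / 2)·diam(S) + (‖D²v‖_∞ / 4)·diam(S)². -/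
/-!
On the simplex `S` with vertices `Aᵢ`, the error `π_S(v)(P) - v(P) = ∑ λᵢ(P) (v(Aᵢ) - v(P))` is
a convex combination of differences, because the barycentric coordinates of a point of `S` are
nonnegative (`bary_nonneg`). It is bounded in two ways, with `d = diam S`:

* the mean value inequality gives `‖Dv‖_∞ d`;
* since `∑ λᵢ(P) (Aᵢ - P) = 0`, the term `Dv(P)(Aᵢ - P)` may be subtracted from each difference,
  and the second-order Taylor estimate `taylor_two_bound` gives `‖D²v‖_∞ d² / 2`.

The claimed bound is the average of these two.
-/

/-- Weights of total mass one representing a point of the convex hull of an affinely independent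
family are nonnegative, since such weights are unique. -/
lemma bary_nonneg {n m : ℕ} (A : Fin m → EuclideanSpace ℝ (Fin n))
    (hA : AffineIndependent ℝ A) (l : Fin m → ℝ) (P : EuclideanSpace ℝ (Fin n))
    (hsum : ∑ i, l i = 1) (hbary : ∑ i, l i • A i = P)
    (hP : P ∈ convexHull ℝ (Set.range A)) (i : Fin m) : 0 ≤ l i := by
  rw [convexHull_range_eq_exists_affineCombination] at hP
  obtain ⟨s, w, hw0, hw1, hwP⟩ := hP
  have h := (affineIndependent_iff_indicator_eq_of_affineCombination_eq ℝ A).1 hA s Finset.univ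
    w l hw1 hsum (by
      rw [hwP, Finset.univ.affineCombination_eq_linear_combination _ _ hsum, hbary])
  have hi := congrFun h i
  simp only [Finset.coe_univ, Set.indicator_univ] at hi
  rw [← hi]
  exact Set.indicator_nonneg (fun j hj => hw0 j hj) i

/-- Second-order Taylor estimate on a convex set. -/
lemma taylor_two_bound {E : Type*} [NormedAddCommGroup E] [NormedSpace ℝ E] {S : Set E}
    (hS : Convex ℝ S) {v : E → ℝ} {C : ℝ} (hv : ∀ x ∈ S, DifferentiableAt ℝ v x)
    (hv2 : ∀ x ∈ S, DifferentiableAt ℝ (fderiv ℝ v) x)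
    (hC : ∀ x ∈ S, ‖fderiv ℝ (fderiv ℝ v) x‖ ≤ C) {P Q : E} (hP : P ∈ S) (hQ : Q ∈ S) :
    |v Q - v P - fderiv ℝ v P (Q - P)| ≤ C / 2 * ‖Q - P‖ ^ 2 := by
  have hmem : ∀ t ∈ Set.Icc (0 : ℝ) 1, P + t • (Q - P) ∈ S := fun t ht =>
    hS.add_smul_sub_mem hP hQ ht
  have hder : ∀ t ∈ Set.Icc (0 : ℝ) 1,
      HasDerivAt (fun t : ℝ => v (P + t • (Q - P)) - v P - t * fderiv ℝ v P (Q - P))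
        (fderiv ℝ v (P + t • (Q - P)) (Q - P) - fderiv ℝ v P (Q - P)) t := by
    intro t ht
    have h1 : HasDerivAt (fun t : ℝ => P + t • (Q - P)) (Q - P) t := by
      simpa using ((hasDerivAt_id t).smul_const (Q - P)).const_add P
    have h2 := (hv _ (hmem t ht)).hasFDerivAt.comp_hasDerivAt t h1
    have h3 : HasDerivAt (fun t : ℝ => t * fderiv ℝ v P (Q - P)) (fderiv ℝ v P (Q - P)) t := by
      simpa only [one_mul, id] using (hasDerivAt_id t).mul_const (fderiv ℝ v P (Q - P))
    exact (h2.sub_const (v P)).sub h3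
  -- Fencing against `B t = C / 2 * ‖Q - P‖ ^ 2 * t ^ 2`, whose derivative dominates.
  have key := image_norm_le_of_norm_deriv_right_le_deriv_boundary
    (B := fun t : ℝ => C / 2 * ‖Q - P‖ ^ 2 * t ^ 2) (B' := fun t : ℝ => C * ‖Q - P‖ ^ 2 * t)
    (fun t ht => (hder t ht).continuousAt.continuousWithinAt)
    (fun t ht => (hder t (Set.Ico_subset_Icc_self ht)).hasDerivWithinAt)
    (by simp)
    (fun t => by
      have := (hasDerivAt_pow 2 t).const_mul (C / 2 * ‖Q - P‖ ^ 2)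
      refine this.congr_deriv ?_
      push_cast
      ring)
    (fun t ht => by
      have hm := hS.norm_image_sub_le_of_norm_fderiv_le hv2 hC hP
        (hmem t (Set.Ico_subset_Icc_self ht))
      rw [add_sub_cancel_left, norm_smul, Real.norm_of_nonneg ht.1] at hm
      rw [← sub_apply]
      calc _ ≤ _ := ContinuousLinearMap.le_opNorm _ _
        _ ≤ C * (t * ‖Q - P‖) * ‖Q - P‖ := by gcongr
        _ = _ := by ring)
    (Set.right_mem_Icc.2 zero_le_one)
  simpa using key

/-- Refined Taylor paper, Lemma 5, estimate (local_interpolation_error_2_V0):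
interpolation error bound from the refined two-point expansion,
`|π_S(v)(P) − v(P)| ≤ ‖Dv‖_∞ diam(S)/2 + ‖D²v‖_∞ diam(S)²/4`. -/
theorem refined_taylor_stmt15 {n : ℕ}
    (A : Fin (n + 1) → EuclideanSpace ℝ (Fin n))
    (hA : AffineIndependent ℝ A)
    (lam : Fin (n + 1) → EuclideanSpace ℝ (Fin n) → ℝ)
    (hsum : ∀ P : EuclideanSpace ℝ (Fin n), ∑ i, lam i P = 1)
    (hbary : ∀ P : EuclideanSpace ℝ (Fin n), ∑ i, lam i P • A i = P)
    (U : Set (EuclideanSpace ℝ (Fin n))) (hUopen : IsOpen U)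
    (hSU : convexHull ℝ (Set.range A) ⊆ U)
    (v : EuclideanSpace ℝ (Fin n) → ℝ) (hv : ContDiffOn ℝ 2 v U) :
    ∀ P ∈ convexHull ℝ (Set.range A),
      |(∑ i, lam i P * v (A i)) - v P| ≤
        ((⨆ Q : convexHull ℝ (Set.range A), ‖fderiv ℝ v Q‖) / 2) *
          Metric.diam (convexHull ℝ (Set.range A)) +
        ((⨆ Q : convexHull ℝ (Set.range A), ‖fderiv ℝ (fderiv ℝ v) Q‖) / 4) *
          Metric.diam (convexHull ℝ (Set.range A)) ^ 2 := by
  intro P hP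
  set S := convexHull ℝ (Set.range A) with hSdef
  have hSc : IsCompact S := (Set.finite_range A).isCompact_convexHull ℝ
  have hSconv : Convex ℝ S := convex_convexHull ℝ _
  have hv1 : ContDiffOn ℝ 1 (fderiv ℝ v) U := hv.fderiv_of_isOpen hUopen (by norm_num)
  have hv2 : ContDiffOn ℝ 0 (fderiv ℝ (fderiv ℝ v)) U :=
    hv1.fderiv_of_isOpen hUopen (by norm_num)
  have hd1 : ∀ x ∈ S, DifferentiableAt ℝ v x := fun x hx =>
    (hv.differentiableOn (by norm_num)).differentiableAt (hUopen.mem_nhds (hSU hx))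
  have hd2 : ∀ x ∈ S, DifferentiableAt ℝ (fderiv ℝ v) x := fun x hx =>
    (hv1.differentiableOn (by norm_num)).differentiableAt (hUopen.mem_nhds (hSU hx))
  -- The suprema are genuine: both derivatives are continuous on the compact set `S`.
  have hM1 : ∀ x ∈ S, ‖fderiv ℝ v x‖ ≤ ⨆ Q : S, ‖fderiv ℝ v Q‖ := by
    intro x hx
    have hb := hSc.bddAbove_image (hv1.continuousOn.mono hSU).norm
    rw [Set.image_eq_range] at hb
    exact le_ciSup hb (⟨x, hx⟩ : S)
  have hM2 : ∀ x ∈ S, ‖fderiv ℝ (fderiv ℝ v) x‖ ≤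
      ⨆ Q : S, ‖fderiv ℝ (fderiv ℝ v) Q‖ := by
    intro x hx
    have hc : ContinuousOn (fun x => ‖fderiv ℝ (fderiv ℝ v) x‖) S :=
      (continuous_norm (E := EuclideanSpace ℝ (Fin n) →L[ℝ] EuclideanSpace ℝ (Fin n) →L[ℝ] ℝ)
        ).comp_continuousOn (hv2.continuousOn.mono hSU)
    have hb := hSc.bddAbove_image hc
    rw [Set.image_eq_range] at hb
    exact le_ciSup hb (⟨x, hx⟩ : S)
  set M1 := ⨆ Q : S, ‖fderiv ℝ v Q‖
  set M2 := ⨆ Q : S, ‖fderiv ℝ (fderiv ℝ v) Q‖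
  have hM1n : 0 ≤ M1 := (norm_nonneg _).trans (hM1 P hP)
  have hM2n : 0 ≤ M2 := (norm_nonneg (fderiv ℝ (fderiv ℝ v) P)).trans (hM2 P hP)
  have hAS : ∀ i, A i ∈ S := fun i => subset_convexHull ℝ _ (Set.mem_range_self i)
  have hdist : ∀ i, ‖A i - P‖ ≤ Metric.diam S := fun i => by
    rw [← dist_eq_norm]
    exact Metric.dist_le_diam_of_mem hSc.isBounded (hAS i) hP
  have hl : ∀ i, 0 ≤ lam i P := fun i =>
    bary_nonneg A hA (fun i => lam i P) P (hsum P) (hbary P) hP i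
  have havg : ∀ (f : Fin (n + 1) → ℝ) (C : ℝ), (∀ i, |f i| ≤ C) →
      |∑ i, lam i P * f i| ≤ C := by
    intro f C hf
    calc |∑ i, lam i P * f i| ≤ ∑ i, |lam i P * f i| := Finset.abs_sum_le_sum_abs _ _
      _ ≤ ∑ i, lam i P * C := Finset.sum_le_sum fun i _ => by
          rw [abs_mul, abs_of_nonneg (hl i)]
          exact mul_le_mul_of_nonneg_left (hf i) (hl i)
      _ = C := by rw [← Finset.sum_mul, hsum, one_mul]
  have hE1 : (∑ i, lam i P * v (A i)) - v P = ∑ i, lam i P * (v (A i) - v P) := by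
    simp only [mul_sub, Finset.sum_sub_distrib]
    rw [← Finset.sum_mul, hsum, one_mul]
  have hlin : ∑ i, lam i P * fderiv ℝ v P (A i - P) = 0 := by
    have h0 : ∑ i, lam i P • (A i - P) = 0 := by
      simp only [smul_sub, Finset.sum_sub_distrib]
      rw [hbary, ← Finset.sum_smul, hsum, one_smul, sub_self]
    have := congrArg (fderiv ℝ v P) h0
    simpa only [map_sum, map_smul, smul_eq_mul, map_zero] using this
  have hE2 : (∑ i, lam i P * v (A i)) - v P =
      ∑ i, lam i P * (v (A i) - v P - fderiv ℝ v P (A i - P)) := by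
    simp only [mul_sub _ (_ - _) _, Finset.sum_sub_distrib]
    rw [hlin, hE1, sub_zero]
  have hB1 : |(∑ i, lam i P * v (A i)) - v P| ≤ M1 * Metric.diam S := by
    rw [hE1]
    refine havg _ _ fun i => ?_
    exact (hSconv.norm_image_sub_le_of_norm_fderiv_le hd1 hM1 hP (hAS i)).trans
      (mul_le_mul_of_nonneg_left (hdist i) hM1n)
  have hB2 : |(∑ i, lam i P * v (A i)) - v P| ≤ M2 / 2 * Metric.diam S ^ 2 := by
    rw [hE2]
    refine havg _ _ fun i => (taylor_two_bound hSconv hd1 hd2 hM2 hP (hAS i)).trans ?_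
    have := hdist i
    gcongr
  linarith
end

section
/- Let A₁, …, A_{n+1} be n+1 affinely independent points of ℝ^n, let λ₁, …, λ_{n+1} : ℝ^n → ℝ be the associated barycentric coordinate functions, let S be the convex hull of {A₁, …, A_{n+1}}, and let diam(S) be the diameter of S. Let v : ℝ^n → ℝ be twice continuously differentiable on an open set containing S, with ‖D²v‖_∞ = sup_{Q∈S} ‖D²v(Q)‖. Define the corrected interpolant π*_S(v)(P) = Σ_{i=1}^{n+1} λᵢ(P)·v(Aᵢ) − (1/2)·Σ_{i=1}^{n+1} λᵢ(P)·Dv(Aᵢ)(Aᵢ−P). Then for every P ∈ S: |π*_S(v)(P) − v(P)| ≤ (‖D²v‖_∞ / 4) · diam(S)². -/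
/-!
Write `S` for the simplex and `M` for the supremum of `‖D²v‖` over `S`. As the barycentric
coordinates of `P` have `∑ λᵢ(P) (Aᵢ - P) = 0`, the term `½ Dv(P)(Aᵢ - P)` may be inserted for free,
and the error becomes the convex combination
`∑ λᵢ(P) (v(Aᵢ) - v(P) - ½ (Dv(P) + Dv(Aᵢ))(Aᵢ - P))`
of trapezoidal-rule errors along the segments `[P, Aᵢ]`. Each of these is at most
`M ‖Aᵢ - P‖² / 4` (`trapezoid_error_le`), and `‖Aᵢ - P‖ ≤ diam S`.

The trapezoidal estimate only uses that `Dv` is `M`-Lipschitz on `S`: the mean value inequality is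
applied to the difference of the values of `v` at two points moving symmetrically away from
the midpoint of the segment.
-/

/-- Trapezoidal-rule error for a function whose derivative is `M`-Lipschitz on a convex set. -/
lemma trapezoid_error_le {E : Type*} [NormedAddCommGroup E] [NormedSpace ℝ E]
    {S : Set E} (hS : Convex ℝ S) {v : E → ℝ} {M : ℝ}
    (hd : ∀ x ∈ S, DifferentiableAt ℝ v x)
    (hL : ∀ x ∈ S, ∀ y ∈ S, ‖fderiv ℝ v y - fderiv ℝ v x‖ ≤ M * ‖y - x‖)
    {x y : E} (hx : x ∈ S) (hy : y ∈ S) :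
    |v y - v x - (1 / 2) * (fderiv ℝ v x (y - x) + fderiv ℝ v y (y - x))| ≤
      M / 4 * ‖y - x‖ ^ 2 := by
  set h := y - x with hh
  have hmem : ∀ s ∈ Set.Icc (0 : ℝ) 1, x + s • h ∈ S := fun s hs =>
    hS.add_smul_sub_mem hx hy hs
  -- `p t` and `q t` move from the midpoint (`t = 0`) to `y` and `x` (`t = 1 / 2`).
  let p : ℝ → E := fun t => x + (1 / 2 + t) • h
  let q : ℝ → E := fun t => x + (1 / 2 - t) • h
  have hpS : ∀ t ∈ Set.Icc (0 : ℝ) (1 / 2), p t ∈ S := fun t ht =>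
    hmem _ ⟨by linarith [ht.1], by linarith [ht.2]⟩
  have hqS : ∀ t ∈ Set.Icc (0 : ℝ) (1 / 2), q t ∈ S := fun t ht =>
    hmem _ ⟨by linarith [ht.2], by linarith [ht.1]⟩
  have hp : ∀ t, HasDerivAt p h t := fun t =>
    ((((hasDerivAt_id t).const_add (1 / 2)).smul_const h).const_add x).congr_deriv (by simp)
  have hq : ∀ t, HasDerivAt q (-h) t := fun t =>
    ((((hasDerivAt_id t).const_sub (1 / 2)).smul_const h).const_add x).congr_deriv (by simp)
  let c : ℝ := fderiv ℝ v x h + fderiv ℝ v y h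
  let G : ℝ → ℝ := fun t => v (p t) - v (q t) - t * c
  let G' : ℝ → ℝ := fun t => fderiv ℝ v (p t) h + fderiv ℝ v (q t) h - c
  have hG : ∀ t ∈ Set.Icc (0 : ℝ) (1 / 2), HasDerivAt G (G' t) t := by
    intro t ht
    have h1 := (hd _ (hpS t ht)).hasFDerivAt.comp_hasDerivAt t (hp t)
    have h2 := (hd _ (hqS t ht)).hasFDerivAt.comp_hasDerivAt t (hq t)
    have h3 := (h1.sub h2).sub ((hasDerivAt_id t).mul_const c)
    exact h3.congr_deriv (by simp [G'])
  have hbound : ∀ t ∈ Set.Ico (0 : ℝ) (1 / 2), ‖G' t‖ ≤ M * ‖h‖ ^ 2 * (1 - 2 * t) := by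
    intro t ht
    have ht' : t ∈ Set.Icc (0 : ℝ) (1 / 2) := ⟨ht.1, ht.2.le⟩
    have e : G' t = (fderiv ℝ v (p t) - fderiv ℝ v y) h
        + (fderiv ℝ v (q t) - fderiv ℝ v x) h := by
      simp only [G', c, sub_apply]; ring
    have e1 : ‖p t - y‖ = (1 / 2 - t) * ‖h‖ := by
      have : p t - y = -((1 / 2 - t) • h) := by
        have : y = x + h := by simp [hh]
        simp only [p]; rw [this]; module
      rw [this, norm_neg, norm_smul, Real.norm_of_nonneg (by linarith [ht.2])]
    have e2 : ‖q t - x‖ = (1 / 2 - t) * ‖h‖ := by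
      have : q t - x = (1 / 2 - t) • h := by simp [q]
      rw [this, norm_smul, Real.norm_of_nonneg (by linarith [ht.2])]
    have b1 := hL y hy (p t) (hpS t ht')
    have b2 := hL x hx (q t) (hqS t ht')
    rw [e1] at b1
    rw [e2] at b2
    have c1 := (fderiv ℝ v (p t) - fderiv ℝ v y).le_of_opNorm_le b1 h
    have c2 := (fderiv ℝ v (q t) - fderiv ℝ v x).le_of_opNorm_le b2 h
    rw [e]
    refine (norm_add_le _ _).trans ((add_le_add c1 c2).trans (le_of_eq ?_))
    ring
  have key := image_norm_le_of_norm_deriv_right_le_deriv_boundary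
    (f := G) (f' := G') (a := 0) (b := 1 / 2)
    (B := fun t => M * ‖h‖ ^ 2 * (t - t ^ 2)) (B' := fun t => M * ‖h‖ ^ 2 * (1 - 2 * t))
    (fun t ht => (hG t ht).continuousAt.continuousWithinAt)
    (fun t ht => (hG t ⟨ht.1, ht.2.le⟩).hasDerivWithinAt)
    (by simp [G, p, q])
    (fun t => by
      simpa using ((hasDerivAt_id t).sub (hasDerivAt_pow 2 t)).const_mul (M * ‖h‖ ^ 2))
    hbound (x := 1 / 2) ⟨by norm_num, le_rfl⟩
  have hp1 : p (1 / 2) = y := by simp only [p, hh]; module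
  have hq1 : q (1 / 2) = x := by simp [q]
  simp only [G, hp1, hq1, Real.norm_eq_abs] at key
  refine key.trans (le_of_eq ?_)
  ring

/-- Weights with sum `1` representing a point of a simplex are nonnegative, because they agree with
the weights of some convex combination. -/
lemma bary_nonneg_s16 {E ι : Type*} [AddCommGroup E] [Module ℝ E] [Fintype ι]
    {A : ι → E} (hA : AffineIndependent ℝ A) {w : ι → ℝ} {P : E} (hw : ∑ i, w i = 1)
    (hP : ∑ i, w i • A i = P) (hPS : P ∈ convexHull ℝ (Set.range A)) (i : ι) : 0 ≤ w i := by
  rw [convexHull_range_eq_exists_affineCombination] at hPS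
  obtain ⟨s, u, hu0, hu1, hu⟩ := hPS
  have h1 : Finset.univ.affineCombination ℝ A w = P := by
    rw [Finset.affineCombination_eq_linear_combination _ _ _ hw, hP]
  have h2 := (affineIndependent_iff_indicator_eq_of_affineCombination_eq ℝ A).1 hA
    Finset.univ s w u hw hu1 (h1.trans hu.symm)
  have h3 := congrFun h2 i
  simp only [Finset.coe_univ, Set.indicator_univ] at h3
  rw [h3]
  exact Set.indicator_nonneg (fun j hj => hu0 j hj) i


/-- Refined Taylor paper, Corollary 1 (local_interpolation_error_2): the corrected
interpolant `π*_S(v)` satisfies `|π*_S(v)(P) − v(P)| ≤ ‖D²v‖_∞ diam(S)² / 4`. -/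
theorem refined_taylor_stmt16 {n : ℕ}
    (A : Fin (n + 1) → EuclideanSpace ℝ (Fin n))
    (hA : AffineIndependent ℝ A)
    (lam : Fin (n + 1) → EuclideanSpace ℝ (Fin n) → ℝ)
    (hsum : ∀ P : EuclideanSpace ℝ (Fin n), ∑ i, lam i P = 1)
    (hbary : ∀ P : EuclideanSpace ℝ (Fin n), ∑ i, lam i P • A i = P)
    (U : Set (EuclideanSpace ℝ (Fin n))) (hUopen : IsOpen U)
    (hSU : convexHull ℝ (Set.range A) ⊆ U)
    (v : EuclideanSpace ℝ (Fin n) → ℝ) (hv : ContDiffOn ℝ 2 v U) :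
    ∀ P ∈ convexHull ℝ (Set.range A),
      |((∑ i, lam i P * v (A i)) -
          (1 / 2) * ∑ i, lam i P * fderiv ℝ v (A i) (A i - P)) - v P| ≤
        ((⨆ Q : convexHull ℝ (Set.range A), ‖fderiv ℝ (fderiv ℝ v) Q‖) / 4) *
          Metric.diam (convexHull ℝ (Set.range A)) ^ 2 := by
  intro P hP
  set S := convexHull ℝ (Set.range A) with hSdef
  have hSconv : Convex ℝ S := convex_convexHull ℝ _
  have hScomp : IsCompact S := (Set.finite_range A).isCompact_convexHull ℝ
  have hAS : ∀ i, A i ∈ S := fun i => subset_convexHull ℝ _ (Set.mem_range_self i)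
  have hd : ∀ x ∈ S, DifferentiableAt ℝ v x := fun x hx =>
    (hv.contDiffAt (hUopen.mem_nhds (hSU hx))).differentiableAt (by norm_num)
  have hD : ContDiffOn ℝ 1 (fderiv ℝ v) U := hv.fderiv_of_isOpen hUopen (by norm_num)
  have hd2 : ∀ x ∈ S, DifferentiableAt ℝ (fderiv ℝ v) x := fun x hx =>
    (hD.contDiffAt (hUopen.mem_nhds (hSU hx))).differentiableAt (by norm_num)
  have hcont : ContinuousOn (fun x => ‖fderiv ℝ (fderiv ℝ v) x‖) S :=
    ((hD.continuousOn_fderiv_of_isOpen hUopen (by norm_num)).mono hSU).norm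
  set M := ⨆ Q : S, ‖fderiv ℝ (fderiv ℝ v) Q‖ with hM
  -- Compactness makes the supremum genuine rather than the default value `0`.
  have hbdd : BddAbove (Set.range fun Q : S => ‖fderiv ℝ (fderiv ℝ v) Q‖) := by
    obtain ⟨C, hC⟩ := hScomp.bddAbove_image hcont
    exact ⟨C, by rintro _ ⟨Q, rfl⟩; exact hC ⟨Q, Q.2, rfl⟩⟩
  have hMle : ∀ x ∈ S, ‖fderiv ℝ (fderiv ℝ v) x‖ ≤ M := fun x hx => le_ciSup hbdd ⟨x, hx⟩
  have hM0 : 0 ≤ M := (norm_nonneg (fderiv ℝ (fderiv ℝ v) P)).trans (hMle P hP)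
  have hL : ∀ x ∈ S, ∀ y ∈ S, ‖fderiv ℝ v y - fderiv ℝ v x‖ ≤ M * ‖y - x‖ :=
    fun x hx y hy => hSconv.norm_image_sub_le_of_norm_fderiv_le hd2 hMle hx hy
  have hnn : ∀ i, 0 ≤ lam i P := bary_nonneg_s16 hA (hsum P) (hbary P) hP
  have hterm : ∀ i, |v (A i) - v P
      - (1 / 2) * (fderiv ℝ v P (A i - P) + fderiv ℝ v (A i) (A i - P))|
      ≤ M / 4 * Metric.diam S ^ 2 := by
    intro i
    refine (trapezoid_error_le hSconv hd hL hP (hAS i)).trans ?_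
    have : ‖A i - P‖ ≤ Metric.diam S := by
      rw [← dist_eq_norm]
      exact Metric.dist_le_diam_of_mem hScomp.isBounded (hAS i) hP
    gcongr
  have hzero : ∑ i, lam i P * fderiv ℝ v P (A i - P) = 0 := by
    have : ∑ i, lam i P • (A i - P) = 0 := by
      simp only [smul_sub, Finset.sum_sub_distrib, ← Finset.sum_smul, hsum, hbary, one_smul,
        sub_self]
    simpa using congrArg (fderiv ℝ v P) this
  have hrepr : ((∑ i, lam i P * v (A i)) -
      (1 / 2) * ∑ i, lam i P * fderiv ℝ v (A i) (A i - P)) - v P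
      = ∑ i, lam i P * (v (A i) - v P
        - (1 / 2) * (fderiv ℝ v P (A i - P) + fderiv ℝ v (A i) (A i - P))) := by
    have hvP : ∑ i, lam i P * v P = v P := by rw [← Finset.sum_mul, hsum, one_mul]
    have hexp : ∀ i, lam i P * (v (A i) - v P
        - (1 / 2) * (fderiv ℝ v P (A i - P) + fderiv ℝ v (A i) (A i - P)))
        = lam i P * v (A i) - lam i P * v P
          - ((1 / 2) * (lam i P * fderiv ℝ v P (A i - P))
            + (1 / 2) * (lam i P * fderiv ℝ v (A i) (A i - P))) := fun i => by ring
    rw [Finset.sum_congr rfl fun i _ => hexp i, Finset.sum_sub_distrib, Finset.sum_sub_distrib,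
      Finset.sum_add_distrib, ← Finset.mul_sum, ← Finset.mul_sum, hzero, hvP]
    ring
  rw [hrepr]
  calc _ ≤ ∑ i, |lam i P * (v (A i) - v P
        - (1 / 2) * (fderiv ℝ v P (A i - P) + fderiv ℝ v (A i) (A i - P)))| :=
        Finset.abs_sum_le_sum_abs _ _
    _ ≤ ∑ i, lam i P * (M / 4 * Metric.diam S ^ 2) := by
        refine Finset.sum_le_sum fun i _ => ?_
        rw [abs_mul, abs_of_nonneg (hnn i)]
        exact mul_le_mul_of_nonneg_left (hterm i) (hnn i)
    _ = M / 4 * Metric.diam S ^ 2 := by rw [← Finset.sum_mul, hsum, one_mul]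
end

section
/- Let a ∈ ℝ, h ∈ ℝ, and let f : ℝ → ℝ be twice continuously differentiable on an open interval containing the closed interval with endpoints a and a+h. Then f(a+h) − f(a) − ((f'(a) + f'(a+h))/2)·h = ∫₀¹ (1/2 − t) · h² · f''(a + t·h) dt; consequently, if m₂ ≤ f''(x) ≤ M₂ for all x in that interval, then (m₂ − M₂)·h²/8 ≤ f(a+h) − f(a) − ((f'(a) + f'(a+h))/2)·h ≤ (M₂ − m₂)·h²/8. -/
/-!
The function `t ↦ (1/2 - t) h f'(a + th) + f(a + th)` has derivative `(1/2 - t) h² f''(a + th)`,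
and its increment over `[0, 1]` is the two-point remainder, which gives the integral formula.
For the bounds, the kernel `1/2 - t` is nonnegative on `[0, 1/2]` and nonpositive on `[1/2, 1]`,
with integrals `1/8` and `-1/8`; bounding `f''` by `M₂` on the first half and by `m₂` on the second
gives the upper bound (`integral_kernel_mul_le`), and the lower bound is the upper bound for `-f''`.
-/

open intervalIntegral in
theorem integral_kernel_mul_le (φ : ℝ → ℝ) (m M : ℝ) (hφ : ContinuousOn φ (Set.Icc 0 1))
    (hb : ∀ t ∈ Set.Icc (0 : ℝ) 1, m ≤ φ t ∧ φ t ≤ M) :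
    ∫ t in (0 : ℝ)..1, (1 / 2 - t) * φ t ≤ (M - m) / 8 := by
  have hc : ContinuousOn (fun t : ℝ => (1 / 2 - t) * φ t) (Set.Icc 0 1) := by fun_prop
  have hi₁ : IntervalIntegrable (fun t : ℝ => (1 / 2 - t) * φ t) MeasureTheory.volume 0 (1 / 2) :=
    (hc.mono (Set.Icc_subset_Icc_right (by norm_num))).intervalIntegrable_of_Icc (by norm_num)
  have hi₂ : IntervalIntegrable (fun t : ℝ => (1 / 2 - t) * φ t) MeasureTheory.volume (1 / 2) 1 :=
    (hc.mono (Set.Icc_subset_Icc_left (by norm_num))).intervalIntegrable_of_Icc (by norm_num)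
  have hk (u v C : ℝ) : ∫ t in u..v, (1 / 2 - t) * C = ((v - u) / 2 - (v ^ 2 - u ^ 2) / 2) * C := by
    rw [integral_mul_const, integral_sub (by simp) (by simp)]
    simp only [intervalIntegral.integral_const, integral_id, smul_eq_mul]
    ring
  have h₁ : ∫ t in (0 : ℝ)..(1 / 2), (1 / 2 - t) * φ t ≤ ∫ t in (0 : ℝ)..(1 / 2), (1 / 2 - t) * M :=
    integral_mono_on (by norm_num) hi₁
      (Continuous.intervalIntegrable (by fun_prop) _ _) fun t ht =>
      mul_le_mul_of_nonneg_left (hb t ⟨ht.1, by linarith [ht.2]⟩).2 (by linarith [ht.2])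
  have h₂ : ∫ t in (1 / 2 : ℝ)..1, (1 / 2 - t) * φ t ≤ ∫ t in (1 / 2 : ℝ)..1, (1 / 2 - t) * m :=
    integral_mono_on (by norm_num) hi₂
      (Continuous.intervalIntegrable (by fun_prop) _ _) fun t ht =>
      mul_le_mul_of_nonpos_left (hb t ⟨by linarith [ht.1], ht.2⟩).1 (by linarith [ht.1])
  rw [← integral_add_adjacent_intervals hi₁ hi₂]
  rw [hk] at h₁ h₂
  linarith

/-- Refined Taylor paper, Eq. (Formule_2_points_V2): the one-dimensional two-point
refined first-order expansion formula, with its integral remainder and the bound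
`(m₂−M₂)h²/8 ≤ f(a+h) − f(a) − h(f'(a)+f'(a+h))/2 ≤ (M₂−m₂)h²/8`. -/
theorem refined_taylor_stmt17 (a h : ℝ)
    (c d : ℝ) (hlo : Set.uIcc a (a + h) ⊆ Set.Ioo c d)
    (f : ℝ → ℝ) (hf : ContDiffOn ℝ 2 f (Set.Ioo c d)) :
    f (a + h) - f a - ((deriv f a + deriv f (a + h)) / 2) * h =
      (∫ t in (0 : ℝ)..1, (1 / 2 - t) * h ^ 2 * deriv (deriv f) (a + t * h)) ∧
    ∀ m₂ M₂ : ℝ,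
      (∀ x ∈ Set.uIcc a (a + h), m₂ ≤ deriv (deriv f) x ∧ deriv (deriv f) x ≤ M₂) →
      (m₂ - M₂) * h ^ 2 / 8 ≤ f (a + h) - f a - ((deriv f a + deriv f (a + h)) / 2) * h ∧
      f (a + h) - f a - ((deriv f a + deriv f (a + h)) / 2) * h ≤ (M₂ - m₂) * h ^ 2 / 8 := by
  have hseg : ∀ t ∈ Set.Icc (0 : ℝ) 1, a + t * h ∈ Set.uIcc a (a + h) := by
    intro t ht
    rw [← segment_eq_uIcc, segment_eq_image']
    exact ⟨t, ht, by simp⟩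
  have hf' : ContDiffOn ℝ 1 (deriv f) (Set.Ioo c d) :=
    hf.deriv_of_isOpen isOpen_Ioo (by norm_num)
  have hf'' : ContinuousOn (deriv (deriv f)) (Set.Ioo c d) :=
    hf'.continuousOn_deriv_of_isOpen isOpen_Ioo le_rfl
  have hd₁ : ∀ x ∈ Set.Ioo c d, HasDerivAt f (deriv f x) x := fun x hx =>
    ((hf.differentiableOn (by norm_num)).differentiableAt (isOpen_Ioo.mem_nhds hx)).hasDerivAt
  have hd₂ : ∀ x ∈ Set.Ioo c d, HasDerivAt (deriv f) (deriv (deriv f) x) x := fun x hx =>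
    ((hf'.differentiableOn (by norm_num)).differentiableAt (isOpen_Ioo.mem_nhds hx)).hasDerivAt
  have hφ : ContinuousOn (fun t : ℝ => deriv (deriv f) (a + t * h)) (Set.Icc 0 1) :=
    hf''.comp (by fun_prop) fun t ht => hlo (hseg t ht)
  have hmain : f (a + h) - f a - ((deriv f a + deriv f (a + h)) / 2) * h =
      ∫ t in (0 : ℝ)..1, (1 / 2 - t) * h ^ 2 * deriv (deriv f) (a + t * h) := by
    have hderiv : ∀ t ∈ Set.uIcc (0 : ℝ) 1,
        HasDerivAt (fun t => (1 / 2 - t) * h * deriv f (a + t * h) + f (a + t * h))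
          ((1 / 2 - t) * h ^ 2 * deriv (deriv f) (a + t * h)) t := by
      intro t ht
      rw [Set.uIcc_of_le zero_le_one] at ht
      have hx := hlo (hseg t ht)
      have hlin : HasDerivAt (fun t : ℝ => a + t * h) h t := by
        simpa using ((hasDerivAt_id t).mul_const h).const_add a
      have hker : HasDerivAt (fun t : ℝ => (1 / 2 - t) * h) (-h) t := by
        simpa only [neg_one_mul] using ((hasDerivAt_id' t).const_sub (1 / 2)).mul_const h
      refine ((hker.mul ((hd₂ _ hx).comp t hlin)).add ((hd₁ _ hx).comp t hlin)).congr_deriv ?_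
      simp only [Function.comp_apply]
      ring
    rw [intervalIntegral.integral_eq_sub_of_hasDerivAt hderiv
      (ContinuousOn.intervalIntegrable_of_Icc zero_le_one (by fun_prop))]
    simp only [one_mul, zero_mul, add_zero]
    ring
  refine ⟨hmain, fun m M hb => ?_⟩
  have hpull : ∫ t in (0 : ℝ)..1, (1 / 2 - t) * h ^ 2 * deriv (deriv f) (a + t * h) =
      h ^ 2 * ∫ t in (0 : ℝ)..1, (1 / 2 - t) * deriv (deriv f) (a + t * h) := by
    rw [← intervalIntegral.integral_const_mul]
    congr 1
    ext t
    ring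
  rw [hmain, hpull]
  have hup := integral_kernel_mul_le _ m M hφ fun t ht => hb _ (hseg t ht)
  have hlow := integral_kernel_mul_le _ (-M) (-m) hφ.neg fun t ht =>
    ⟨neg_le_neg (hb _ (hseg t ht)).2, neg_le_neg (hb _ (hseg t ht)).1⟩
  simp only [Pi.neg_apply, mul_neg, intervalIntegral.integral_neg] at hlow
  constructor <;> nlinarith [sq_nonneg h]
end
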